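/- Let N be a subspace of K^V with K = F², v ∈ V, and X, Y ⊆ V∖{v}. Then λ_{N∖v}(X) + λ_{N/v}(Y) ≥ λ_N(X∩Y) + λ_N(X∪Y∪{v}) − 1, where λ_P(U) = (dim P − dim(P×(W∖U)) − dim(P×U))/2 for a chain-group P on ground set W. -/

import Mathlib

variable {F : Type*} [Field F] {V : Type*} [Fintype V] [DecidableEq V]

def bplusL (F : Type*) [Field F] : (F × F) →ₗ[F] (F × F) →ₗ[F] F :=
  LinearMap.mk₂ F (fun x y => x.1 * y.2 + x.2 * y.1)
    (by intros; simp [Prod.fst_add, Prod.snd_add]; ring)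
    (by intros; simp [Prod.smul_fst, Prod.smul_snd, smul_eq_mul]; ring)
    (by intros; simp [Prod.fst_add, Prod.snd_add]; ring)
    (by intros; simp [Prod.smul_fst, Prod.smul_snd, smul_eq_mul]; ring)

def bminusL (F : Type*) [Field F] : (F × F) →ₗ[F] (F × F) →ₗ[F] F :=
  LinearMap.mk₂ F (fun x y => x.1 * y.2 - x.2 * y.1)
    (by intros; simp [Prod.fst_add, Prod.snd_add]; ring)
    (by intros; simp [Prod.smul_fst, Prod.smul_snd, smul_eq_mul]; ring)
    (by intros; simp [Prod.fst_add, Prod.snd_add]; ring)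
    (by intros; simp [Prod.smul_fst, Prod.smul_snd, smul_eq_mul]; ring)

/-- Restriction of chains to a subset `X` of the ground set. -/
def res (F K : Type*) [Semiring F] [AddCommMonoid K] [Module F K]
    {V : Type*} (X : Finset V) : (V → K) →ₗ[F] ({x // x ∈ X} → K) :=
  LinearMap.funLeft F K Subtype.val

/-- Chains vanishing outside `X`. -/
def vanish (F : Type*) [Semiring F] {K : Type*} [AddCommMonoid K] [Module F K]
    {V : Type*} (X : Finset V) : Submodule F (V → K) where
  carrier := {f | ∀ v ∉ X, f v = 0}
  add_mem' := by
    intro a b ha hb v hv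
    simp only [Pi.add_apply, ha v hv, hb v hv, add_zero]
  zero_mem' := by intro v hv; rfl
  smul_mem' := by
    intro c a ha v hv
    simp only [Pi.smul_apply, ha v hv, smul_zero]

/-- `N×X`, the restriction to `X` of the chains in `N` vanishing outside `X`. -/
def timesTo {W : Type*} {K : Type*} [AddCommGroup K] [Module F K]
    (N : Submodule F (W → K)) (X : Finset W) : Submodule F ({x // x ∈ X} → K) :=
  (N ⊓ vanish F X).map (res F K X)

/-- The connectivity function
`λ_N(U) = (dim N − dim(N×(W∖U)) − dim(N×U)) / 2` of a chain-group `N`. -/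
noncomputable def lam {W : Type*} [Fintype W] [DecidableEq W]
    {K : Type*} [AddCommGroup K] [Module F K]
    (N : Submodule F (W → K)) (U : Finset W) : ℚ :=
  ((Module.finrank F N : ℚ) - (Module.finrank F (timesTo N Uᶜ) : ℚ)
    - (Module.finrank F (timesTo N U) : ℚ)) / 2

/-- The constraint `⟨f(v),(1,0)⟩_K = 0` for all `v ∈ X`, used for deletion. -/
def delC (β : (F × F) →ₗ[F] (F × F) →ₗ[F] F) (X : Finset V) :
    Submodule F (V → F × F) :=
  ⨅ v ∈ X, LinearMap.ker ((β.flip (1, 0)).comp (LinearMap.proj v))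

/-- The constraint `⟨f(v),(0,1)⟩_K = 0` for all `v ∈ X`, used for contraction. -/
def conC (β : (F × F) →ₗ[F] (F × F) →ₗ[F] F) (X : Finset V) :
    Submodule F (V → F × F) :=
  ⨅ v ∈ X, LinearMap.ker ((β.flip (0, 1)).comp (LinearMap.proj v))

/-- The deletion `N∖X` of a chain-group `N`. -/
def deleteCG (β : (F × F) →ₗ[F] (F × F) →ₗ[F] F) (N : Submodule F (V → F × F))
    (X : Finset V) : Submodule F ({x // x ∈ Xᶜ} → F × F) :=
  (N ⊓ delC β X).map (res F (F × F) Xᶜ)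

/-- The contraction `N/X` of a chain-group `N`. -/
def contractCG (β : (F × F) →ₗ[F] (F × F) →ₗ[F] F) (N : Submodule F (V → F × F))
    (X : Finset V) : Submodule F ({x // x ∈ Xᶜ} → F × F) :=
  (N ⊓ conC β X).map (res F (F × F) Xᶜ)

open Module

section Helpers

variable {K : Type*} [AddCommGroup K] [Module F K]

theorem mem_vanish {W : Type*} {X : Finset W} {f : W → K} :
    f ∈ vanish F X ↔ ∀ w ∉ X, f w = 0 :=
  Iff.rfl

theorem vanish_mono {W : Type*} {X Y : Finset W} (h : X ⊆ Y) :
    (vanish F X : Submodule F (W → K)) ≤ vanish F Y :=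
  fun _ hf w hw => hf w fun hwX => hw (h hwX)

theorem ker_res {W : Type*} [Fintype W] [DecidableEq W] (X : Finset W) :
    LinearMap.ker (res F K X) = vanish F Xᶜ := by
  ext f
  simp [mem_vanish, res, funext_iff, LinearMap.funLeft_apply]

theorem finrank_map_add_finrank_inf_ker {E E' : Type*} [AddCommGroup E] [Module F E]
    [FiniteDimensional F E] [AddCommGroup E'] [Module F E'] (φ : E →ₗ[F] E')
    (P : Submodule F E) :
    finrank F (P.map φ) + finrank F (P ⊓ LinearMap.ker φ : Submodule F E) = finrank F P := by
  have h := LinearMap.finrank_range_add_finrank_ker (φ.domRestrict P)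
  rw [LinearMap.range_domRestrict, LinearMap.ker_domRestrict] at h
  rw [← h, ← Submodule.map_comap_subtype, Submodule.finrank_map_subtype_eq]

theorem finrank_timesTo {W : Type*} [Fintype W] [DecidableEq W] [FiniteDimensional F K]
    (N : Submodule F (W → K)) (X : Finset W) :
    finrank F (timesTo N X) = finrank F (N ⊓ vanish F X : Submodule F (W → K)) := by
  have h := finrank_map_add_finrank_inf_ker (res F K X) (N ⊓ vanish F X)
  have hbot : N ⊓ vanish F X ⊓ LinearMap.ker (res F K X) = ⊥ := by
    rw [ker_res, eq_bot_iff]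
    rintro f ⟨⟨-, hf⟩, hf'⟩
    refine (Submodule.mem_bot F).2 (funext fun w => ?_)
    by_cases hw : w ∈ X
    · exact hf' w (by simpa using hw)
    · exact hf w hw
  rw [hbot, finrank_bot, add_zero] at h
  exact h

/-- Restricting away from `v` loses exactly the chains supported on `v`. -/
theorem finrank_map_res_compl_singleton [FiniteDimensional F K] (P : Submodule F (V → K))
    (v : V) :
    finrank F (P.map (res F K {v}ᶜ)) + finrank F (P ⊓ vanish F {v} : Submodule F (V → K))
      = finrank F P := by
  have h := finrank_map_add_finrank_inf_ker (res F K {v}ᶜ) P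
  rwa [ker_res, compl_compl] at h

theorem finrank_timesTo_map_res [FiniteDimensional F K] (P : Submodule F (V → K))
    {v : V} {T : Finset V} (hv : v ∈ T) :
    finrank F (timesTo (P.map (res F K {v}ᶜ)) (T.subtype (· ∈ ({v}ᶜ : Finset V))))
        + finrank F (P ⊓ vanish F {v} : Submodule F (V → K))
      = finrank F (P ⊓ vanish F T : Submodule F (V → K)) := by
  have hmap : P.map (res F K {v}ᶜ) ⊓ vanish F (T.subtype (· ∈ ({v}ᶜ : Finset V)))
      = (P ⊓ vanish F T).map (res F K {v}ᶜ) := by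
    ext g
    constructor
    · rintro ⟨⟨f, hf, rfl⟩, hg⟩
      refine ⟨f, ⟨hf, fun w hw => ?_⟩, rfl⟩
      have hwv : w ∈ ({v}ᶜ : Finset V) := by
        simpa using fun h : w = v => hw (h ▸ hv)
      exact hg ⟨w, hwv⟩ (by simpa using hw)
    · rintro ⟨f, ⟨hf, hfT⟩, rfl⟩
      exact ⟨⟨f, hf, rfl⟩, fun w hw => hfT w (by simpa using hw)⟩
  have hinf : P ⊓ vanish F T ⊓ vanish F {v} = P ⊓ vanish F {v} := by
    rw [inf_assoc, inf_eq_right.2 (vanish_mono (Finset.singleton_subset_iff.2 hv))]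
  rw [finrank_timesTo, hmap, ← hinf]
  exact finrank_map_res_compl_singleton _ v

/-- The connectivity function of the restriction of `P` away from `v`, in terms of `P`. -/
theorem two_mul_lam_map_res [FiniteDimensional F K] (P : Submodule F (V → K))
    {v : V} {X : Finset V} (hX : v ∉ X) :
    2 * lam (P.map (res F K {v}ᶜ)) (X.subtype (· ∈ ({v}ᶜ : Finset V)))
      = finrank F P + finrank F (P ⊓ vanish F {v} : Submodule F (V → K))
        - finrank F (P ⊓ vanish F Xᶜ : Submodule F (V → K))
        - finrank F (P ⊓ vanish F (insert v X) : Submodule F (V → K)) := by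
  have hcompl : (X.subtype (· ∈ ({v}ᶜ : Finset V)))ᶜ = Xᶜ.subtype (· ∈ ({v}ᶜ : Finset V)) := by
    ext w
    simp
  have hinsert : X.subtype (· ∈ ({v}ᶜ : Finset V))
      = (insert v X).subtype (· ∈ ({v}ᶜ : Finset V)) := by
    ext ⟨w, hw⟩
    have hwv : w ≠ v := by simpa using hw
    simp [hwv]
  have h₁ := finrank_map_res_compl_singleton P v
  have h₂ := finrank_timesTo_map_res P (Finset.mem_compl.2 hX)
  have h₃ := finrank_timesTo_map_res P (Finset.mem_insert_self v X)
  rw [← hcompl] at h₂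
  rw [← hinsert] at h₃
  rw [lam, ← h₁, ← h₂, ← h₃]
  push_cast
  ring

theorem finrank_le_finrank_inf_ker_add_one {E : Type*} [AddCommGroup E] [Module F E]
    [FiniteDimensional F E] (φ : E →ₗ[F] F) (N : Submodule F E) :
    finrank F N ≤ finrank F (N ⊓ LinearMap.ker φ : Submodule F E) + 1 := by
  have h := finrank_map_add_finrank_inf_ker φ N
  have hle := Submodule.finrank_le (N.map φ)
  rw [finrank_self] at hle
  omega

theorem finrank_add_finrank_le_of_le_of_inf_le {E : Type*} [AddCommGroup E] [Module F E]
    [FiniteDimensional F E] {A B S I : Submodule F E} (hA : A ≤ S) (hB : B ≤ S)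
    (hI : A ⊓ B ≤ I) :
    finrank F A + finrank F B ≤ finrank F S + finrank F I := by
  rw [← Submodule.finrank_sup_add_finrank_inf_eq]
  exact add_le_add (Submodule.finrank_mono (sup_le hA hB)) (Submodule.finrank_mono hI)

/-- The dimension count behind uncrossing: chains constrained at `v` by two conditions which
together force the value at `v` to vanish. -/
theorem finrank_inf_vanish_add_le [FiniteDimensional F K] (N C D : Submodule F (V → K)) {v : V}
    (hCD : ∀ f ∈ C, f ∈ D → f v = 0) {A B S I : Finset V} (hA : A ⊆ S) (hB : B ⊆ S)
    (hI : (A ∩ B).erase v ⊆ I) :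
    finrank F (N ⊓ C ⊓ vanish F A : Submodule F (V → K))
        + finrank F (N ⊓ D ⊓ vanish F B : Submodule F (V → K))
      ≤ finrank F (N ⊓ vanish F S : Submodule F (V → K))
        + finrank F (N ⊓ vanish F I : Submodule F (V → K)) := by
  refine finrank_add_finrank_le_of_le_of_inf_le
    (inf_le_inf inf_le_left (vanish_mono hA)) (inf_le_inf inf_le_left (vanish_mono hB)) ?_
  rintro f ⟨⟨⟨hN, hC⟩, hfA⟩, ⟨-, hD⟩, hfB⟩
  refine ⟨hN, fun w hw => ?_⟩
  by_cases hwv : w = v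
  · exact hwv ▸ hCD f hC hD
  by_cases hwA : w ∈ A
  · refine hfB w fun hwB => hw (hI ?_)
    simp [hwv, hwA, hwB]
  · exact hfA w hwA

theorem two_mul_lam {W : Type*} [Fintype W] [DecidableEq W] [FiniteDimensional F K]
    (N : Submodule F (W → K)) (U : Finset W) :
    2 * lam N U = finrank F N - finrank F (N ⊓ vanish F Uᶜ : Submodule F (W → K))
      - finrank F (N ⊓ vanish F U : Submodule F (W → K)) := by
  rw [lam, finrank_timesTo, finrank_timesTo]
  ring

end Helpers

theorem delC_singleton {W : Type*} (β : (F × F) →ₗ[F] (F × F) →ₗ[F] F) (v : W) :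
    delC β {v} = LinearMap.ker ((β.flip (1, 0)).comp (LinearMap.proj v)) := by
  simp [delC]

theorem conC_singleton {W : Type*} (β : (F × F) →ₗ[F] (F × F) →ₗ[F] F) (v : W) :
    conC β {v} = LinearMap.ker ((β.flip (0, 1)).comp (LinearMap.proj v)) := by
  simp [conC]

theorem apply_eq_zero_of_mem_delC_of_mem_conC {W : Type*}
    {β : (F × F) →ₗ[F] (F × F) →ₗ[F] F}
    (hβ : β = bplusL F ∨ β = bminusL F) {v : W} {f : W → F × F}
    (hdel : f ∈ delC β {v}) (hcon : f ∈ conC β {v}) : f v = 0 := by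
  rw [delC_singleton, LinearMap.mem_ker] at hdel
  rw [conC_singleton, LinearMap.mem_ker] at hcon
  rcases hβ with rfl | rfl
  · simp only [bplusL, LinearMap.comp_apply, LinearMap.proj_apply, LinearMap.flip_apply,
      LinearMap.mk₂_apply] at hdel hcon
    exact Prod.ext (by simpa using hcon) (by simpa using hdel)
  · simp only [bminusL, LinearMap.comp_apply, LinearMap.proj_apply, LinearMap.flip_apply,
      LinearMap.mk₂_apply] at hdel hcon
    exact Prod.ext (by simpa using hcon) (by simpa using hdel)

/-- Bixby-type inequality for chain-groups:
`λ_{N∖v}(X) + λ_{N/v}(Y) ≥ λ_N(X∩Y) + λ_N(X∪Y∪{v}) − 1`. -/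
theorem lam_delete_add_lam_contract (β : (F × F) →ₗ[F] (F × F) →ₗ[F] F)
    (hβ : β = bplusL F ∨ β = bminusL F)
    (N : Submodule F (V → F × F)) (v : V) (X Y : Finset V)
    (hX : v ∉ X) (hY : v ∉ Y) :
    lam N (X ∩ Y) + lam N (X ∪ Y ∪ {v}) - 1
      ≤ lam (deleteCG β N {v}) (X.subtype (· ∈ ({v}ᶜ : Finset V)))
        + lam (contractCG β N {v}) (Y.subtype (· ∈ ({v}ᶜ : Finset V))) := by
  have hdel := two_mul_lam_map_res (N ⊓ delC β {v}) hX
  have hcon := two_mul_lam_map_res (N ⊓ conC β {v}) hY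
  have hinter := two_mul_lam N (X ∩ Y)
  have hunion := two_mul_lam N (X ∪ Y ∪ {v})
  have hcodim_del : finrank F N
      ≤ finrank F (N ⊓ delC β {v} : Submodule F (V → F × F)) + 1 := by
    rw [delC_singleton]
    exact finrank_le_finrank_inf_ker_add_one _ N
  have hcodim_con : finrank F N
      ≤ finrank F (N ⊓ conC β {v} : Submodule F (V → F × F)) + 1 := by
    rw [conC_singleton]
    exact finrank_le_finrank_inf_ker_add_one _ N
  have hCD : ∀ f ∈ delC β {v}, f ∈ conC β {v} → f v = 0 :=
    fun f => apply_eq_zero_of_mem_delC_of_mem_conC hβ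
  have hinside := finrank_inf_vanish_add_le N _ _ hCD
    (A := insert v X) (B := insert v Y) (S := X ∪ Y ∪ {v}) (I := X ∩ Y)
    (by grind) (by grind) (by grind)
  have houtside := finrank_inf_vanish_add_le N _ _ hCD
    (A := Xᶜ) (B := Yᶜ) (S := (X ∩ Y)ᶜ) (I := (X ∪ Y ∪ {v})ᶜ)
    (Finset.compl_subset_compl.2 Finset.inter_subset_left)
    (Finset.compl_subset_compl.2 Finset.inter_subset_right)
    (fun w => by simp +contextual)
  rw [deleteCG, contractCG]
  qify at hcodim_del hcodim_con hinside houtside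
  linarith [Nat.cast_nonneg (α := ℚ)
      (finrank F (N ⊓ delC β {v} ⊓ vanish F {v} : Submodule F (V → F × F))),
    Nat.cast_nonneg (α := ℚ)
      (finrank F (N ⊓ conC β {v} ⊓ vanish F {v} : Submodule F (V → F × F)))]
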